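/- Let U, C : ℝ^L → ℝ be twice continuously differentiable, U concave and strictly increasing in each coordinate, C convex and strictly increasing in each coordinate. Fix s^(0) with C(s^(0)) ≤ 0, and let J be the set of the J coordinates whose sensitivities (∂U/∂s_i)/(∂C/∂s_i) at s^(0) are strictly larger than the sensitivities of all coordinates not in J. Define Ũ(s_J) = U(s_J, s_K^(0)). Then there exists a neighborhood N of s^(0) such that for every s ∈ N that is efficiently reachable from s^(0) with Ũ(s_J) > Ũ(s_J^(0)), we have U(s) > U(s^(0)). -/

import Mathlib

def StrictIncEach {L : ℕ} (f : (Fin L → ℝ) → ℝ) : Prop :=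
  ∀ s : Fin L → ℝ, ∀ i : Fin L, ∀ x : ℝ, s i < x → f s < f (Function.update s i x)

/-- `s` is efficiently reachable from `s0` with full-state proxy `Ut`
(depending only on coordinates in `J`). -/
def EffReachable {L : ℕ} (C : (Fin L → ℝ) → ℝ)
    (Ut : (Fin L → ℝ) → ℝ) (s0 s : Fin L → ℝ) : Prop :=
  C s ≤ 0 ∧
  ¬ ∃ s' : Fin L → ℝ, C s' ≤ 0 ∧ Ut s ≤ Ut s' ∧
      (∀ i : Fin L, |s' i - s0 i| ≤ |s i - s0 i|) ∧
      (∃ i : Fin L, |s' i - s0 i| < |s i - s0 i|)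

/-- Sensitivity of coordinate `i` of `U` relative to `C` at state `s`. -/
noncomputable def sens {L : ℕ} (U C : (Fin L → ℝ) → ℝ) (s : Fin L → ℝ) (i : Fin L) : ℝ :=
  fderiv ℝ U s (Pi.single i 1) / fderiv ℝ C s (Pi.single i 1)

open Filter Function Set Topology

/-!
Let `s` be efficiently reachable with a gain in the proxy. No coordinate outside `J` has been
raised, and if some has been lowered then the constraint is tight, `C s = 0`.

Scale back the coordinates of `J`: undo the lowered ones and shrink the raised ones until the cost
returns to `0`. The resulting state, `w` on `J` and `s` off `J`, is feasible and lies between `s₀`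
and `s`, so by efficiency its proxy value is at most that of `s`. From `s₀` to this state,
coordinates of `J` are only raised and the others only lowered, at a nonnegative net cost.

Now let `r` be a price separating the sensitivities off `J` from those on `J`. Near `s₀`, raising
`J`-coordinates yields at least `r` units of `U` per unit of `C`, and lowering the others loses
fewer than `r` units of `U` per unit of `C`; strict differentiability makes these rates independent
of the base point. Hence what `s` loses off `J` is less than the proxy gain of the scaled-back
state, which is at most the proxy gain of `s`.
-/

theorem monotone_of_le_update {ι α β : Type*} [Finite ι] [DecidableEq ι] [Preorder α] [Preorder β]
    {f : (ι → α) → β} (hf : ∀ x i a, x i ≤ a → f x ≤ f (update x i a)) : Monotone f := by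
  cases nonempty_fintype ι
  intro x y hxy
  suffices h : ∀ S : Finset ι, f x ≤ f (S.piecewise y x) by
    simpa only [Finset.piecewise_univ] using h Finset.univ
  intro S
  induction S using Finset.induction_on with
  | empty => rw [Finset.piecewise_empty]
  | insert i S hi ih =>
    rw [Finset.piecewise_insert]
    refine ih.trans (hf _ _ _ ?_)
    rw [Finset.piecewise_eq_of_notMem _ _ _ hi]
    exact hxy i

theorem eventually_uIcc_subset {ι α : Type*} [LinearOrder α] [TopologicalSpace α] [OrderTopology α]
    {a : ι → α} {N : Set (ι → α)} (hN : N ∈ 𝓝 a) : ∀ᶠ x in 𝓝 a, uIcc a x ⊆ N := by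
  have hinf : Tendsto (fun x => a ⊓ x) (𝓝 a) (𝓝 a) := tendsto_pi_nhds.2 fun i => by
    simpa using ((continuous_const (y := a i)).inf (continuous_apply i)).tendsto a
  have hsup : Tendsto (fun x => a ⊔ x) (𝓝 a) (𝓝 a) := tendsto_pi_nhds.2 fun i => by
    simpa using ((continuous_const (y := a i)).sup (continuous_apply i)).tendsto a
  exact (hinf.Icc hsup).eventually (eventually_smallSets_subset.2 hN)

theorem update_mem_uIcc {ι α : Type*} [DecidableEq ι] [Lattice α] {a b : ι → α} {i : ι} {x : α}
    (hx : x ∈ uIcc (a i) (b i)) : update b i x ∈ uIcc a b :=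
  ⟨le_update_iff.2 ⟨hx.1, fun _ _ => inf_le_right⟩, update_le_iff.2 ⟨hx.2, fun _ _ => le_sup_right⟩⟩

theorem exists_notMem_lt_of_lt_piecewise {ι : Type*} {α : ι → Type*} [∀ i, Preorder (α i)]
    {J : Finset ι} [∀ i, Decidable (i ∈ J)] {s t : ∀ i, α i} (h : s < J.piecewise s t) :
    ∃ i ∉ J, s i < t i := by
  obtain ⟨i, hi⟩ := (Pi.lt_def.1 h).2
  have hiJ : i ∉ J := fun hiJ => hi.ne (J.piecewise_eq_of_mem _ _ hiJ).symm
  exact ⟨i, hiJ, by rwa [J.piecewise_eq_of_notMem _ _ hiJ] at hi⟩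

theorem fderiv_apply_nonneg_of_monotone {E : Type*} [NormedAddCommGroup E] [NormedSpace ℝ E]
    [PartialOrder E] [IsOrderedAddMonoid E] [IsOrderedModule ℝ E] {f : E → ℝ} {x v : E}
    (hf : Monotone f) (hd : DifferentiableAt ℝ f x) (hv : 0 ≤ v) : 0 ≤ fderiv ℝ f x v := by
  have hline : HasDerivAt (fun t : ℝ => f (x + t • v)) (fderiv ℝ f x v) 0 :=
    hd.hasFDerivAt.hasLineDerivAt v
  exact hline.nonneg_of_monotone fun s t hst => hf (by gcongr)

theorem fderiv_apply_pos_of_convexOn {E : Type*} [NormedAddCommGroup E] [NormedSpace ℝ E]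
    {f : E → ℝ} {x v : E} (hf : ConvexOn ℝ univ f) (hd : DifferentiableAt ℝ f x)
    (hlt : f (x - v) < f x) : 0 < fderiv ℝ f x v := by
  have hline : HasDerivAt (fun t : ℝ => f (AffineMap.lineMap (x - v) x t)) (fderiv ℝ f x v) 1 := by
    have hd' : HasFDerivAt f (fderiv ℝ f x) (AffineMap.lineMap (x - v) x (1 : ℝ)) := by
      simpa using hd.hasFDerivAt
    have h := hd'.comp_hasDerivAt 1 AffineMap.hasDerivAt_lineMap
    rwa [sub_sub_cancel] at h
  have hslope := (hf.comp_affineMap (AffineMap.lineMap (x - v) x)).slope_le_of_hasDerivAt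
    (mem_univ 0) (mem_univ 1) one_pos hline
  simp only [slope_def_field, comp_apply, AffineMap.lineMap_apply_zero, AffineMap.lineMap_apply_one,
    sub_zero, div_one] at hslope
  linarith

theorem exists_pos_mul_norm_le {ι : Type*} [Fintype ι] [DecidableEq ι] {J : Finset ι}
    {φ : (ι → ℝ) →ₗ[ℝ] ℝ} (hφ : ∀ i ∈ J, 0 < φ (Pi.single i 1)) :
    ∃ δ > 0, ∀ v, 0 ≤ v → (∀ i ∉ J, v i = 0) → δ * ‖v‖ ≤ φ v := by
  obtain ⟨δ, hδφ, hδ⟩ : ∃ δ, (∀ i ∈ J, δ < φ (Pi.single i 1)) ∧ 0 < δ :=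
    (((Finset.eventually_all J).2 fun i hi => Ioo_mem_nhdsGT (hφ i hi)).mono
      fun δ hδ i hi => (hδ i hi).2).and self_mem_nhdsWithin |>.exists
  refine ⟨δ, hδ, fun v hv hvJ => ?_⟩
  have hsum : φ v = ∑ i, v i * φ (Pi.single i 1) := by
    conv_lhs => rw [pi_eq_sum_univ' v]
    simp only [map_sum, map_smul, smul_eq_mul]
  have hle : ∀ i, δ * v i ≤ v i * φ (Pi.single i 1) := fun i => by
    by_cases hi : i ∈ J
    · rw [mul_comm]
      exact mul_le_mul_of_nonneg_left (hδφ i hi).le (hv i)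
    · simp [hvJ i hi]
  have hterm : ∀ i, 0 ≤ v i * φ (Pi.single i 1) := fun i =>
    (mul_nonneg hδ.le (hv i)).trans (hle i)
  rw [mul_comm, ← le_div_iff₀ hδ, hsum]
  refine (pi_norm_le_iff_of_nonneg (div_nonneg (Finset.sum_nonneg fun i _ => hterm i) hδ.le)).2
    fun i => ?_
  rw [Real.norm_of_nonneg (hv i), le_div_iff₀ hδ, mul_comm]
  exact (hle i).trans (Finset.single_le_sum (fun i _ => hterm i) (Finset.mem_univ i))

theorem exists_mem_nhds_sub_lt_sub {ι : Type*} [Finite ι] [DecidableEq ι] {J : Finset ι}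
    {f g : (ι → ℝ) → ℝ} {f' g' : (ι → ℝ) →L[ℝ] ℝ} {a : ι → ℝ}
    (hf : HasStrictFDerivAt f f' a) (hg : HasStrictFDerivAt g g' a)
    (hlt : ∀ i ∈ J, f' (Pi.single i 1) < g' (Pi.single i 1)) :
    ∃ N ∈ 𝓝 a, ∀ p ∈ N, ∀ q ∈ N, ∀ p' ∈ N, ∀ q' ∈ N, p < q → (∀ i ∉ J, q i = p i) →
      q' - p' = q - p → f q - f p < g q' - g p' := by
  cases nonempty_fintype ι
  obtain ⟨δ, hδ, hbound⟩ := exists_pos_mul_norm_le (φ := (g' - f').toLinearMap) (J := J)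
    fun i hi => sub_pos.2 (hlt i hi)
  lift δ to NNReal using hδ.le
  have hδ3 : 0 < δ / 3 := div_pos hδ three_pos
  obtain ⟨Nf, hNf, happf⟩ := hf.approximates_deriv_on_nhds (.inr hδ3)
  obtain ⟨Ng, hNg, happg⟩ := hg.approximates_deriv_on_nhds (.inr hδ3)
  refine ⟨Nf ∩ Ng, inter_mem hNf hNg, fun p hp q hq p' hp' q' hq' hpq hJ heq => ?_⟩
  have hfpq := (abs_le.1 (happf q hq.1 p hp.1)).2
  have hgpq := (abs_le.1 (happg q' hq'.2 p' hp'.2)).1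
  have hgap := hbound (q - p) (sub_nonneg.2 hpq.le) fun i hi => sub_eq_zero.2 (hJ i hi)
  have hnorm : 0 < δ * ‖q - p‖ := mul_pos hδ (norm_pos_iff.2 (sub_ne_zero.2 hpq.ne'))
  simp only [heq, NNReal.coe_div, NNReal.coe_ofNat, ContinuousLinearMap.coe_coe,
    sub_apply] at hfpq hgpq hgap
  linarith

namespace StrictIncEach

variable {L : ℕ} {f : (Fin L → ℝ) → ℝ}

protected theorem monotone (hf : StrictIncEach f) : Monotone f :=
  monotone_of_le_update fun x i a ha => by
    rcases ha.eq_or_lt with rfl | ha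
    · rw [update_eq_self]
    · exact (hf x i a ha).le

theorem sub_single_lt (hf : StrictIncEach f) (x : Fin L → ℝ) (i : Fin L) :
    f (x - Pi.single i 1) < f x := by
  have h := hf (x - Pi.single i 1) i (x i) (by simp)
  convert h using 2
  ext k
  rcases eq_or_ne k i with rfl | hk <;> simp [*]

theorem fderiv_single_nonneg (hf : StrictIncEach f) {x : Fin L → ℝ}
    (hd : DifferentiableAt ℝ f x) (i : Fin L) : 0 ≤ fderiv ℝ f x (Pi.single i 1) :=
  fderiv_apply_nonneg_of_monotone hf.monotone hd (Pi.single_nonneg.2 zero_le_one)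

theorem fderiv_single_pos_of_convexOn (hf : StrictIncEach f) (hconv : ConvexOn ℝ univ f)
    {x : Fin L → ℝ} (hd : DifferentiableAt ℝ f x) (i : Fin L) :
    0 < fderiv ℝ f x (Pi.single i 1) :=
  fderiv_apply_pos_of_convexOn hconv hd (hf.sub_single_lt x i)

end StrictIncEach

namespace EffReachable

variable {L : ℕ} {C V : (Fin L → ℝ) → ℝ} {s₀ s s' : Fin L → ℝ} {k : Fin L}

theorem eq_of_mem_uIcc (h : EffReachable C V s₀ s) (hmem : s' ∈ uIcc s₀ s) (hC : C s' ≤ 0)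
    (hV : V s ≤ V s') : s' = s := by
  have hcoord : ∀ i, s' i ∈ uIcc (s₀ i) (s i) := fun i => ⟨hmem.1 i, hmem.2 i⟩
  by_contra hne
  obtain ⟨i, hi⟩ := ne_iff.1 hne
  refine h.2 ⟨s', hC, hV, fun i => abs_sub_left_of_mem_uIcc (hcoord i), i, ?_⟩
  rcases mem_uIcc.1 (hcoord i) with ⟨hl, hu⟩ | ⟨hl, hu⟩
  · rw [abs_of_nonneg (sub_nonneg.2 hl), abs_of_nonneg (sub_nonneg.2 (hl.trans hu))]
    exact sub_lt_sub_right (hu.lt_of_ne hi) _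
  · rw [abs_of_nonpos (sub_nonpos.2 hu), abs_of_nonpos (sub_nonpos.2 (hl.trans hu))]
    exact neg_lt_neg (sub_lt_sub_right (hl.lt_of_ne' hi) _)

theorem proxy_le_of_mem_uIcc (h : EffReachable C V s₀ s) (hmem : s' ∈ uIcc s₀ s)
    (hC : C s' ≤ 0) : V s' ≤ V s := by
  by_contra! hlt
  exact hlt.ne (congrArg V (h.eq_of_mem_uIcc hmem hC hlt.le)).symm

theorem le_of_forall_update_eq (h : EffReachable C V s₀ s) (hC : Monotone C)
    (hV : ∀ x, V (update s k x) = V s) : s k ≤ s₀ k := by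
  by_contra! hk
  have hfeas : C (update s k (s₀ k)) ≤ 0 :=
    (hC (update_le_self_iff.2 hk.le)).trans h.1
  have heq := h.eq_of_mem_uIcc (update_mem_uIcc left_mem_uIcc) hfeas (hV _).ge
  exact hk.ne (update_eq_self_iff.1 heq)

theorem eq_zero_of_lt (h : EffReachable C V s₀ s) (hC : Continuous C)
    (hV : ∀ x, V (update s k x) = V s) (hk : s k < s₀ k) : C s = 0 := by
  refine h.1.antisymm (not_lt.1 fun hneg => ?_)
  have hlim : Tendsto (fun x => C (update s k x)) (𝓝[>] s k) (𝓝 (C s)) := by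
    have hcont : Continuous fun x => C (update s k x) :=
      hC.comp (continuous_const.update k continuous_id)
    simpa using (hcont.tendsto (s k)).mono_left nhdsWithin_le_nhds
  obtain ⟨x, hfeas, hx⟩ := ((hlim.eventually_lt_const hneg).and (Ioo_mem_nhdsGT hk)).exists
  have hmem : x ∈ uIcc (s₀ k) (s k) := mem_uIcc.2 (.inr ⟨hx.1.le, hx.2.le⟩)
  have heq := h.eq_of_mem_uIcc (update_mem_uIcc hmem) hfeas.le (hV x).ge
  exact hx.1.ne' (update_eq_self_iff.1 heq)

end EffReachable

section Proxy

variable {L : ℕ} {U C : (Fin L → ℝ) → ℝ} {s₀ s : Fin L → ℝ} {J : Finset (Fin L)}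

theorem exists_mem_uIcc_piecewise_eq_zero (hcont : Continuous C) (hmono : Monotone C)
    (hs₀ : C s₀ ≤ 0) (hs : C s = 0) (hdrop : ∀ k ∉ J, s k ≤ s₀ k) :
    ∃ w ∈ uIcc s₀ s, s₀ ≤ w ∧ C (J.piecewise w s) = 0 := by
  have hlow : C (J.piecewise s₀ s) ≤ 0 := by
    refine (hmono fun i => ?_).trans hs₀
    by_cases hi : i ∈ J <;> simp [hi, hdrop]
  have hhigh : 0 ≤ C (J.piecewise (s₀ ⊔ s) s) :=
    hs.ge.trans (hmono (J.le_piecewise_of_le_of_le le_sup_right le_rfl))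
  have hpiece : Continuous fun w => J.piecewise w s := continuous_pi fun i => by
    by_cases hi : i ∈ J <;> simp only [hi, Finset.piecewise_eq_of_mem,
      Finset.piecewise_eq_of_notMem, not_false_eq_true] <;> fun_prop
  obtain ⟨w, hw, hCw⟩ := (convex_Icc (𝕜 := ℝ) s₀ (s₀ ⊔ s)).isPreconnected.intermediate_value
    (left_mem_Icc.2 le_sup_left) (right_mem_Icc.2 le_sup_left)
    (hcont.comp hpiece).continuousOn ⟨hlow, hhigh⟩
  exact ⟨w, ⟨inf_le_left.trans hw.1, hw.2⟩, hw.1, hCw⟩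

theorem exists_mul_lt_and_lt_mul_of_sens_lt (hCpos : ∀ i, 0 < fderiv ℝ C s₀ (Pi.single i 1))
    (hsens : ∀ j ∈ J, ∀ k ∉ J, sens U C s₀ k < sens U C s₀ j) :
    ∃ r : ℝ,
      (∀ j ∈ J, r * fderiv ℝ C s₀ (Pi.single j 1) < fderiv ℝ U s₀ (Pi.single j 1)) ∧
      ∀ k ∉ J, fderiv ℝ U s₀ (Pi.single k 1) < r * fderiv ℝ C s₀ (Pi.single k 1) := by
  obtain ⟨r, hlo, hhi⟩ := Order.exists_between_finsets (Jᶜ.image (sens U C s₀))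
    (J.image (sens U C s₀)) (by simpa using fun k hk j hj => hsens j hj k hk)
  refine ⟨r, fun j hj => ?_, fun k hk => ?_⟩
  · exact (lt_div_iff₀ (hCpos j)).1 (hhi _ (Finset.mem_image_of_mem _ hj))
  · exact (div_lt_iff₀ (hCpos k)).1 (hlo _ (Finset.mem_image_of_mem _ (Finset.mem_compl.2 hk)))

theorem eventually_sub_lt_sub_of_sens_lt (hU : HasStrictFDerivAt U (fderiv ℝ U s₀) s₀)
    (hC : HasStrictFDerivAt C (fderiv ℝ C s₀) s₀)
    (hUnonneg : ∀ k ∉ J, 0 ≤ fderiv ℝ U s₀ (Pi.single k 1))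
    (hCpos : ∀ i, 0 < fderiv ℝ C s₀ (Pi.single i 1))
    (hsens : ∀ j ∈ J, ∀ k ∉ J, sens U C s₀ k < sens U C s₀ j) :
    ∀ᶠ s in 𝓝 s₀, s < J.piecewise s s₀ → ∀ w ∈ uIcc s₀ s, s₀ ≤ w →
      C s₀ ≤ C (J.piecewise w s) →
      U (J.piecewise s s₀) - U s < U (J.piecewise w s₀) - U s₀ := by
  obtain ⟨r, hrJ, hrK⟩ := exists_mul_lt_and_lt_mul_of_sens_lt hCpos hsens
  have hrC : HasStrictFDerivAt (fun s => r * C s) (r • fderiv ℝ C s₀) s₀ := hC.const_mul r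
  obtain ⟨N₁, hN₁, hraise⟩ := exists_mem_nhds_sub_lt_sub (J := J) hrC hU hrJ
  obtain ⟨N₂, hN₂, hlower⟩ := exists_mem_nhds_sub_lt_sub (J := Jᶜ) hU hrC
    fun k hk => hrK k (Finset.mem_compl.1 hk)
  filter_upwards [eventually_uIcc_subset (inter_mem hN₁ hN₂)] with s hN hlt w hw hs₀w hcost
  have hmem : ∀ x ∈ uIcc s₀ s, ∀ y ∈ uIcc s₀ s, J.piecewise x y ∈ N₁ ∩ N₂ := fun x hx y hy =>
    hN (J.piecewise_mem_Icc_of_mem_of_mem hx hy)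
  have hws₀ := hmem w hw s₀ left_mem_uIcc
  have hr : 0 < r := by
    obtain ⟨k, hkJ, -⟩ := exists_notMem_lt_of_lt_piecewise hlt
    exact pos_of_mul_pos_left ((hUnonneg k hkJ).trans_lt (hrK k hkJ)) (hCpos k).le
  have hloss : U (J.piecewise s s₀) - U s <
      r * C (J.piecewise w s₀) - r * C (J.piecewise w s) := by
    refine hlower _ (hN right_mem_uIcc).2 _ (hmem s right_mem_uIcc s₀ left_mem_uIcc).2
      _ (hmem w hw s right_mem_uIcc).2 _ hws₀.2 hlt ?_ ?_
    · intro i hi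
      exact J.piecewise_eq_of_mem _ _ (by simpa using hi)
    · ext i
      by_cases hi : i ∈ J <;> simp [hi]
  have hgain : r * C (J.piecewise w s₀) - r * C s₀ ≤ U (J.piecewise w s₀) - U s₀ := by
    rcases (J.le_piecewise_of_le_of_le hs₀w le_rfl).eq_or_lt with heq | hlt'
    · simp only [← heq, sub_self, le_refl]
    · exact (hraise _ (hN left_mem_uIcc).1 _ hws₀.1 _ (hN left_mem_uIcc).1 _ hws₀.1 hlt'
        (fun i hi => J.piecewise_eq_of_notMem _ _ hi) rfl).le
  have hprice := mul_le_mul_of_nonneg_left hcost hr.le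
  linarith

end Proxy

theorem stmt_8_general {L : ℕ} {U C : (Fin L → ℝ) → ℝ} {s₀ : Fin L → ℝ} {J : Finset (Fin L)}
    (hU : HasStrictFDerivAt U (fderiv ℝ U s₀) s₀) (hC : HasStrictFDerivAt C (fderiv ℝ C s₀) s₀)
    (hUnonneg : ∀ k ∉ J, 0 ≤ fderiv ℝ U s₀ (Pi.single k 1))
    (hCpos : ∀ i, 0 < fderiv ℝ C s₀ (Pi.single i 1))
    (hCcont : Continuous C) (hCmono : Monotone C) (hs₀ : C s₀ ≤ 0)
    (hsens : ∀ j ∈ J, ∀ k ∉ J, sens U C s₀ k < sens U C s₀ j) :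
    ∀ᶠ s in 𝓝 s₀, EffReachable C (fun x => U (J.piecewise x s₀)) s₀ s →
      U s₀ < U (J.piecewise s s₀) → U s₀ < U s := by
  filter_upwards [eventually_sub_lt_sub_of_sens_lt hU hC hUnonneg hCpos hsens]
    with s hexchange heff hgain
  have hV : ∀ k ∉ J, ∀ x, U (J.piecewise (update s k x) s₀) = U (J.piecewise s s₀) :=
    fun k hk x => congrArg U (J.piecewise_congr
      (fun i hi => update_of_ne (ne_of_mem_of_not_mem hi hk) x s) fun _ _ => rfl)
  have hdrop : ∀ k ∉ J, s k ≤ s₀ k := fun k hk => heff.le_of_forall_update_eq hCmono (hV k hk)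
  have hle : s ≤ J.piecewise s s₀ := fun i => by
    by_cases hi : i ∈ J <;> simp [hi, hdrop]
  rcases hle.eq_or_lt with heq | hlt
  · rwa [← heq] at hgain
  obtain ⟨k, hkJ, hk⟩ := exists_notMem_lt_of_lt_piecewise hlt
  have htight : C s = 0 := heff.eq_zero_of_lt hCcont (hV k hkJ) hk
  obtain ⟨w, hw, hs₀w, hCw⟩ :=
    exists_mem_uIcc_piecewise_eq_zero hCcont hCmono hs₀ htight hdrop
  have hproxy : U (J.piecewise w s₀) ≤ U (J.piecewise s s₀) := by
    have hws := J.piecewise_mem_Icc_of_mem_of_mem hw right_mem_uIcc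
    simpa only [Finset.piecewise_idem_left] using heff.proxy_le_of_mem_uIcc hws hCw.le
  have hloss := hexchange hlt w hw hs₀w (hs₀.trans hCw.ge)
  linarith

/-- Local improvement theorem: proxying on the most sensitive attributes guarantees
local true-utility gains under efficient optimization. -/
theorem stmt_8 {L : ℕ} (U C : (Fin L → ℝ) → ℝ)
    (hU2 : ContDiff ℝ 2 U) (hC2 : ContDiff ℝ 2 C)
    (hUconc : ConcaveOn ℝ Set.univ U) (hCconv : ConvexOn ℝ Set.univ C)
    (hUm : StrictIncEach U) (hCm : StrictIncEach C)
    (s0 : Fin L → ℝ) (hs0 : C s0 ≤ 0)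
    (J : Finset (Fin L)) (hJne : J.Nonempty) (hJprop : J ≠ Finset.univ)
    (hsens : ∀ j ∈ J, ∀ k ∉ J, sens U C s0 k < sens U C s0 j)
    (Ut : (Fin L → ℝ) → ℝ)
    (hUt : ∀ s : Fin L → ℝ, Ut s = U (fun i => if i ∈ J then s i else s0 i)) :
    ∃ N ∈ nhds s0, ∀ s ∈ N,
      EffReachable C Ut s0 s → Ut s0 < Ut s → U s0 < U s := by
  obtain rfl : Ut = fun s => U (J.piecewise s s0) := funext hUt
  simpa only [Finset.piecewise_same] using eventually_iff_exists_mem.1 <| stmt_8_general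
    (hU2.hasStrictFDerivAt two_ne_zero) (hC2.hasStrictFDerivAt two_ne_zero)
    (fun k _ => hUm.fderiv_single_nonneg (hU2.differentiable two_ne_zero s0) k)
    (hCm.fderiv_single_pos_of_convexOn hCconv (hC2.differentiable two_ne_zero s0))
    hC2.continuous hCm.monotone hs0 hsens
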